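/- Let μ and ν be compactly supported probability measures on ℝ^d and let r, u, v be positive real numbers with r² = u + v. Then s_r(μ * ν) ≤ (r²/2) · Γ(d/2) · (d/(2e))^{−d/2} · √( D⁺_u H(μ * n_u) · D⁺_v H(ν * n_v) ), where D⁺_u H(μ * n_u) denotes the right-hand derivative of the function t ↦ H(μ * n_t) at t = u (which exists), and similarly for D⁺_v H(ν * n_v). -/

import Mathlib

open MeasureTheory Real

/-- Density of the centered Gaussian on `ℝ^d` with covariance matrix `y • I`. -/
noncomputable def gaussD (d : ℕ) (y : ℝ) (x : EuclideanSpace ℝ (Fin d)) : ℝ :=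
  (2 * Real.pi * y) ^ (-(d : ℝ) / 2) * Real.exp (-‖x‖ ^ 2 / (2 * y))

/-- `∂/∂y n_y (x)`. -/
noncomputable def gaussDy (d : ℕ) (y : ℝ) (x : EuclideanSpace ℝ (Fin d)) : ℝ :=
  deriv (fun u => gaussD d u x) y

/-- The detail of a measure `μ` on `ℝ^d` around the scale `r`. -/
noncomputable def detail (d : ℕ) (μ : Measure (EuclideanSpace ℝ (Fin d))) (r : ℝ) : ℝ :=
  r ^ 2 * (Real.Gamma ((d : ℝ) / 2) / 2) * ((d : ℝ) / (2 * Real.exp 1)) ^ (-(d : ℝ) / 2) *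
    ∫ x, |∫ z, gaussDy d (r ^ 2) (x - z) ∂μ|

/-- The differential entropy `H(μ * n_y) = ∫ -f log f` where `f` is the density of `μ * n_y`. -/
noncomputable def entG (d : ℕ) (μ : Measure (EuclideanSpace ℝ (Fin d))) (y : ℝ) : ℝ :=
  ∫ x, Real.negMulLog (∫ z, gaussD d y (x - z) ∂μ)

abbrev Eu (d : ℕ) := EuclideanSpace ℝ (Fin d)

lemma gaussD_pos {d : ℕ} {t : ℝ} (ht : 0 < t) (w : Eu d) : 0 < gaussD d t w := by
  unfold gaussD; positivity

lemma gaussD_cont {d : ℕ} {t : ℝ} : Continuous (gaussD d t) := by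
  unfold gaussD; fun_prop

lemma gaussD_hasDerivAt {d : ℕ} {t : ℝ} (ht : 0 < t) (w : Eu d) :
    HasDerivAt (fun t => gaussD d t w)
      (gaussD d t w * (‖w‖ ^ 2 / (2 * t ^ 2) - d / (2 * t))) t := by
  have h1 : HasDerivAt (fun t : ℝ => 2 * π * t) (2 * π) t := by
    simpa using (hasDerivAt_id t).const_mul (2 * π)
  have h2 := h1.rpow_const (p := -(d : ℝ) / 2) (Or.inl (by positivity))
  have h3 : HasDerivAt (fun t : ℝ => -‖w‖ ^ 2 / (2 * t)) (‖w‖ ^ 2 / (2 * t ^ 2)) t := by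
    have := ((hasDerivAt_id t).const_mul 2).inv (by simp; positivity)
    have := this.const_mul (-‖w‖ ^ 2)
    convert! this using 1
    simp; field_simp
  have := h2.mul h3.exp
  unfold gaussD
  convert! this using 1
  rw [Real.rpow_sub_one (by positivity)]
  field_simp
  ring

lemma gaussDy_eq {d : ℕ} {t : ℝ} (ht : 0 < t) (w : Eu d) :
    gaussDy d t w = gaussD d t w * (‖w‖ ^ 2 / (2 * t ^ 2) - d / (2 * t)) :=
  (gaussD_hasDerivAt ht w).deriv

lemma gaussD_line {d : ℕ} {t : ℝ} (ht : 0 < t) (w e : Eu d) (s : ℝ) :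
    HasDerivAt (fun s : ℝ => gaussD d t (w + s • e))
      (gaussD d t (w + s • e) * (-(inner ℝ (w + s • e) e) / t)) s := by
  have h1 : HasDerivAt (fun s : ℝ => w + s • e) e s := by
    simpa using ((hasDerivAt_id s).smul_const e).const_add w
  have h2 := h1.norm_sq
  have h3 := ((h2.neg.div_const (2 * t)).exp).const_mul ((2 * π * t) ^ (-(d : ℝ) / 2))
  unfold gaussD
  convert! h3 using 1
  simp only [Pi.neg_apply]
  field_simp

lemma pow_exp_bound (b : ℝ) (hb : 0 < b) (k : ℕ) (t : ℝ) (ht : 0 ≤ t) :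
    (1 + t) ^ k * exp (-b * t ^ 2) ≤ exp (k ^ 2 / (2 * b)) * exp (-(b / 2) * t ^ 2) := by
  have h1 : (1 + t) ^ k ≤ exp (k * t) := by
    rw [Real.exp_nat_mul]
    exact pow_le_pow_left₀ (by positivity) (by linarith [add_one_le_exp t]) _
  calc _ ≤ exp (k * t) * exp (-b * t ^ 2) := by gcongr
    _ = exp (k * t + -b * t ^ 2) := (exp_add _ _).symm
    _ ≤ exp (k ^ 2 / (2 * b) + -(b / 2) * t ^ 2) := by
        apply exp_le_exp.2
        have : (k : ℝ) ^ 2 / (2 * b) + -(b / 2) * t ^ 2 - (k * t + -b * t ^ 2)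
          = (k - b * t) ^ 2 / (2 * b) := by field_simp; ring
        have h : 0 ≤ ((k : ℝ) - b * t) ^ 2 / (2 * b) := by positivity
        linarith
    _ = _ := exp_add _ _

lemma integrable_gauss {d : ℕ} (b : ℝ) (hb : 0 < b) :
    Integrable (fun x : Eu d => exp (-b * ‖x‖ ^ 2)) := by
  have h := GaussianFourier.integral_rexp_neg_mul_sq_norm (V := Eu d) hb
  by_contra hn
  rw [integral_undef hn] at h
  have : 0 < (π / b) ^ ((Module.finrank ℝ (Eu d) : ℝ) / 2) := by positivity
  linarith

lemma integrable_poly {d : ℕ} {V : Type*} [NormedAddCommGroup V] (F : Eu d → V)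
    (hF : AEStronglyMeasurable F) (C b : ℝ) (hb : 0 < b) (k : ℕ)
    (h : ∀ x, ‖F x‖ ≤ C * ((1 + ‖x‖) ^ k * exp (-b * ‖x‖ ^ 2))) : Integrable F := by
  have hC : 0 ≤ C := by
    have := (norm_nonneg _).trans (h 0)
    simpa using this
  refine Integrable.mono' (((integrable_gauss (b / 2) (half_pos hb)).const_mul
    (C * exp (k ^ 2 / (2 * b))))) hF (Filter.Eventually.of_forall fun x => (h x).trans ?_)
  rw [mul_assoc]
  exact mul_le_mul_of_nonneg_left (pow_exp_bound b hb k _ (norm_nonneg _)) hC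

lemma gaussD_integral {d : ℕ} {t : ℝ} (ht : 0 < t) : ∫ x : Eu d, gaussD d t x = 1 := by
  unfold gaussD
  rw [integral_const_mul]
  have h := GaussianFourier.integral_rexp_neg_mul_sq_norm (V := Eu d) (b := 1 / (2 * t)) (by positivity)
  have h2 : ∀ x : Eu d, -‖x‖ ^ 2 / (2 * t) = - (1 / (2 * t)) * ‖x‖ ^ 2 := fun x => by ring
  simp only [h2, h]
  rw [finrank_euclideanSpace_fin, show π / (1 / (2 * t)) = 2 * π * t by field_simp,
    ← rpow_add (by positivity), neg_div]
  simp

/-- upper bound for shifted Gaussians -/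
lemma gaussD_shift_le {d : ℕ} {u t R : ℝ} (hu : 0 < u) (ht1 : u / 2 ≤ t) (ht2 : t ≤ 2 * u)
    (x z : Eu d) (hz : ‖z‖ ≤ R) :
    gaussD d t (x - z) ≤ ((π * u) ^ (-(d : ℝ) / 2) * exp (R ^ 2 / u)) *
      exp (-(1 / (8 * u)) * ‖x‖ ^ 2) := by
  have ht : 0 < t := by linarith
  unfold gaussD
  rw [mul_assoc ((π * u) ^ (-(d : ℝ) / 2)), ← exp_add]
  have h1 : (2 * π * t) ^ (-(d : ℝ) / 2) ≤ (π * u) ^ (-(d : ℝ) / 2) := by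
    apply rpow_le_rpow_of_nonpos (by positivity)
    · nlinarith [pi_pos]
    · rw [neg_div]; simp; positivity
  gcongr
  have hx : ‖x‖ ≤ ‖x - z‖ + R := by
    have := norm_add_le (x - z) z
    simp at this; linarith
  have h2 : ‖x‖ ^ 2 ≤ 2 * ‖x - z‖ ^ 2 + 2 * R ^ 2 := by
    nlinarith [sq_nonneg (‖x - z‖ - R), norm_nonneg x, norm_nonneg (x - z)]
  have h3 : ‖x‖ ^ 2 / (8 * u) ≤ ‖x - z‖ ^ 2 / (2 * t) + R ^ 2 / u := by
    calc ‖x‖ ^ 2 / (8 * u) ≤ (2 * ‖x - z‖ ^ 2 + 2 * R ^ 2) / (8 * u) := by gcongr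
      _ = ‖x - z‖ ^ 2 / (2 * (2 * u)) + R ^ 2 / u * (1 / 4) := by field_simp; ring
      _ ≤ ‖x - z‖ ^ 2 / (2 * t) + R ^ 2 / u * 1 := by gcongr; norm_num
      _ = _ := by ring
  rw [neg_div]
  have : -(1 / (8 * u)) * ‖x‖ ^ 2 = - (‖x‖ ^ 2 / (8 * u)) := by ring
  linarith

lemma gaussD_shift_ge {d : ℕ} {u t R : ℝ} (hu : 0 < u) (ht1 : u / 2 ≤ t) (ht2 : t ≤ 2 * u)
    (x z : Eu d) (hz : ‖z‖ ≤ R) :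
    (4 * π * u) ^ (-(d : ℝ) / 2) * exp (-((1 + R) ^ 2 * (1 + ‖x‖) ^ 2 / u)) ≤
      gaussD d t (x - z) := by
  have ht : 0 < t := by linarith
  have hR : 0 ≤ R := (norm_nonneg z).trans hz
  unfold gaussD
  have h1 : (4 * π * u) ^ (-(d : ℝ) / 2) ≤ (2 * π * t) ^ (-(d : ℝ) / 2) := by
    apply rpow_le_rpow_of_nonpos (by positivity)
    · nlinarith [pi_pos]
    · rw [neg_div]; simp; positivity
  gcongr
  rw [neg_div, neg_le_neg_iff]
  have hx : ‖x - z‖ ≤ (1 + R) * (1 + ‖x‖) := by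
    have := norm_sub_le x z
    nlinarith [norm_nonneg x, mul_nonneg hR (norm_nonneg x)]
  rw [← mul_pow]
  gcongr
  linarith
section meas
variable {d : ℕ} {μ : Measure (Eu d)} [IsProbabilityMeasure μ] {R : ℝ}

lemma int_cont {V : Type*} [NormedAddCommGroup V] (H : ∀ᵐ z ∂μ, ‖z‖ ≤ R)
    (F : Eu d → V) (hF : Continuous F) : Integrable F μ := by
  obtain ⟨C, hC⟩ := (isCompact_closedBall (0 : Eu d) R).exists_bound_of_continuousOn hF.continuousOn
  refine Integrable.of_bound hF.aestronglyMeasurable C ?_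
  filter_upwards [H] with z hz
  exact hC z (by simpa using hz)

lemma deriv_under (H : ∀ᵐ z ∂μ, ‖z‖ ≤ R) (G G' : ℝ → Eu d → ℝ) (s₀ ε : ℝ) (hε : 0 < ε)
    (hG : Continuous (G s₀)) (hGm : ∀ s ∈ Set.Icc (s₀ - ε) (s₀ + ε), Continuous (G s))
    (hG' : ContinuousOn (Function.uncurry G') (Set.Icc (s₀ - ε) (s₀ + ε) ×ˢ Set.univ))
    (hd : ∀ s ∈ Set.Icc (s₀ - ε) (s₀ + ε), ∀ z, HasDerivAt (fun s => G s z) (G' s z) s) :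
    HasDerivAt (fun s => ∫ z, G s z ∂μ) (∫ z, G' s₀ z ∂μ) s₀ := by
  have hnh : Set.Icc (s₀ - ε) (s₀ + ε) ∈ nhds s₀ := Icc_mem_nhds (by linarith) (by linarith)
  obtain ⟨C, hC⟩ := (isCompact_Icc.prod (isCompact_closedBall (0 : Eu d) R)).exists_bound_of_continuousOn
    (hG'.mono (Set.prod_mono (le_refl (Set.Icc (s₀ - ε) (s₀ + ε))) (Set.subset_univ _)))
  have hc : Continuous (G' s₀) := by
    have : ContinuousOn (fun z : Eu d => Function.uncurry G' (s₀, z)) Set.univ :=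
      hG'.comp (by fun_prop) (fun z _ => ⟨⟨by linarith, by linarith⟩, trivial⟩)
    simpa [continuousOn_univ] using this
  refine (hasDerivAt_integral_of_dominated_loc_of_deriv_le (bound := fun _ => C) hnh ?_
    (int_cont H _ hG) hc.aestronglyMeasurable ?_ (integrable_const _) ?_).2
  · filter_upwards [hnh] with s hs
    exact (hGm s hs).aestronglyMeasurable
  · filter_upwards [H] with z hz s hs
    exact hC (s, z) ⟨hs, by simpa using hz⟩
  · exact Filter.Eventually.of_forall fun z s hs => hd s hs z

noncomputable def dens (μ : Measure (Eu d)) (t : ℝ) (x : Eu d) : ℝ := ∫ z, gaussD d t (x - z) ∂μ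
noncomputable def dty (μ : Measure (Eu d)) (t : ℝ) (x : Eu d) : ℝ :=
  ∫ z, gaussD d t (x - z) * (‖x - z‖ ^ 2 / (2 * t ^ 2) - d / (2 * t)) ∂μ
noncomputable def grd (μ : Measure (Eu d)) (t : ℝ) (x : Eu d) : Eu d :=
  ∫ z, (gaussD d t (x - z) * (-1 / t)) • (x - z) ∂μ
noncomputable def lap (μ : Measure (Eu d)) (t : ℝ) (e x : Eu d) : ℝ :=
  ∫ z, gaussD d t (x - z) * ((inner ℝ (x - z) e) ^ 2 / t ^ 2 - ‖e‖ ^ 2 / t) ∂μ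

lemma meas_param {V : Type*} [NormedAddCommGroup V] [NormedSpace ℝ V] [SecondCountableTopology V]
    (F : Eu d → V) (hF : Continuous F) :
    StronglyMeasurable (fun x => ∫ z, F (x - z) ∂μ) := by
  have : StronglyMeasurable (fun p : Eu d × Eu d => F (p.1 - p.2)) :=
    (show Continuous (fun p : Eu d × Eu d => F (p.1 - p.2)) by fun_prop).stronglyMeasurable
  exact this.integral_prod_right'

lemma dens_meas (t : ℝ) : StronglyMeasurable (dens μ t) := meas_param _ gaussD_cont
lemma dty_meas (t : ℝ) : StronglyMeasurable (dty μ t) :=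
  meas_param (fun w => gaussD d t w * (‖w‖ ^ 2 / (2 * t ^ 2) - d / (2 * t)))
    (by have := @gaussD_cont d t; fun_prop)
lemma grd_meas (t : ℝ) : StronglyMeasurable (grd μ t) :=
  meas_param (fun w => (gaussD d t w * (-1 / t)) • w) (by have := @gaussD_cont d t; fun_prop)
lemma lap_meas (t : ℝ) (e : Eu d) : StronglyMeasurable (lap μ t e) :=
  meas_param (fun w => gaussD d t w * ((inner ℝ w e) ^ 2 / t ^ 2 - ‖e‖ ^ 2 / t))
    (by have := @gaussD_cont d t; fun_prop)

lemma moment_bound {V : Type*} [NormedAddCommGroup V] [NormedSpace ℝ V]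
    (H : ∀ᵐ z ∂μ, ‖z‖ ≤ R) {t A : ℝ} (ht : 0 < t) (hA : 0 ≤ A) (k : ℕ)
    (h : Eu d → V) (hb : ∀ w, ‖h w‖ ≤ A * (1 + ‖w‖) ^ k * gaussD d t w) (x : Eu d) :
    ‖∫ z, h (x - z) ∂μ‖ ≤ A * (1 + R) ^ k * (1 + ‖x‖) ^ k * dens μ t x := by
  have hi : Integrable (fun z => gaussD d t (x - z)) μ :=
    int_cont H _ (by have := @gaussD_cont d t; fun_prop)
  unfold dens
  rw [← integral_const_mul]
  refine norm_integral_le_of_norm_le (hi.const_mul _) ?_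
  filter_upwards [H] with z hz
  refine (hb _).trans ?_
  have hR : 0 ≤ R := (norm_nonneg z).trans hz
  have := (gaussD_pos ht (x - z)).le
  have hx : 1 + ‖x - z‖ ≤ (1 + R) * (1 + ‖x‖) := by
    have := norm_sub_le x z
    nlinarith [norm_nonneg x, mul_nonneg hR (norm_nonneg x)]
  rw [mul_assoc A ((1 + R) ^ k), ← mul_pow]
  gcongr

lemma dens_le (H : ∀ᵐ z ∂μ, ‖z‖ ≤ R) {u t : ℝ} (hu : 0 < u) (ht1 : u / 2 ≤ t) (ht2 : t ≤ 2 * u)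
    (x : Eu d) : dens μ t x ≤ ((π * u) ^ (-(d : ℝ) / 2) * exp (R ^ 2 / u)) *
      exp (-(1 / (8 * u)) * ‖x‖ ^ 2) := by
  have hi : Integrable (fun z => gaussD d t (x - z)) μ :=
    int_cont H _ (by have := @gaussD_cont d t; fun_prop)
  have := integral_mono_ae hi (integrable_const (((π * u) ^ (-(d : ℝ) / 2) * exp (R ^ 2 / u)) *
      exp (-(1 / (8 * u)) * ‖x‖ ^ 2))) (by
      filter_upwards [H] with z hz
      exact gaussD_shift_le hu ht1 ht2 x z hz)
  simpa [dens] using this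

lemma dens_ge (H : ∀ᵐ z ∂μ, ‖z‖ ≤ R) {u t : ℝ} (hu : 0 < u) (ht1 : u / 2 ≤ t) (ht2 : t ≤ 2 * u)
    (x : Eu d) :
    (4 * π * u) ^ (-(d : ℝ) / 2) * exp (-((1 + R) ^ 2 * (1 + ‖x‖) ^ 2 / u)) ≤ dens μ t x := by
  have hi : Integrable (fun z => gaussD d t (x - z)) μ :=
    int_cont H _ (by have := @gaussD_cont d t; fun_prop)
  have := integral_mono_ae (integrable_const ((4 * π * u) ^ (-(d : ℝ) / 2) *
      exp (-((1 + R) ^ 2 * (1 + ‖x‖) ^ 2 / u)))) hi (by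
      filter_upwards [H] with z hz
      exact gaussD_shift_ge hu ht1 ht2 x z hz)
  simpa [dens] using this

lemma dens_pos (H : ∀ᵐ z ∂μ, ‖z‖ ≤ R) {t : ℝ} (ht : 0 < t) (x : Eu d) : 0 < dens μ t x :=
  lt_of_lt_of_le (by positivity) (dens_ge H ht (by linarith) (by linarith) x)

lemma log_bound (H : ∀ᵐ z ∂μ, ‖z‖ ≤ R) {u : ℝ} (hu : 0 < u) :
    ∃ C : ℝ, 0 ≤ C ∧ ∀ t, u / 2 ≤ t → t ≤ 2 * u → ∀ x, |log (dens μ t x)| ≤ C * (1 + ‖x‖) ^ 2 := by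
  set C0 := (π * u) ^ (-(d : ℝ) / 2) * exp (R ^ 2 / u) with hC0
  set c0 := (4 * π * u) ^ (-(d : ℝ) / 2) with hc0
  have hC0p : 0 < C0 := by positivity
  have hc0p : 0 < c0 := by positivity
  refine ⟨|log C0| + |log c0| + (1 + R) ^ 2 / u, by positivity, fun t h1 h2 x => ?_⟩
  have ht : 0 < t := by linarith
  have hf := dens_pos H ht x
  have hp : 1 ≤ (1 + ‖x‖) ^ 2 := by nlinarith [norm_nonneg x]
  have up : log (dens μ t x) ≤ log C0 := by
    apply log_le_log hf
    refine (dens_le H hu h1 h2 x).trans ?_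
    apply mul_le_of_le_one_right hC0p.le
    apply exp_le_one_iff.2
    rw [neg_mul, neg_nonpos]; positivity
  have lo : log c0 - (1 + R) ^ 2 * (1 + ‖x‖) ^ 2 / u ≤ log (dens μ t x) := by
    have := log_le_log (by positivity) (dens_ge H hu h1 h2 x)
    rw [log_mul hc0p.ne' (exp_pos _).ne', log_exp] at this
    linarith
  have e : (1 + R) ^ 2 * (1 + ‖x‖) ^ 2 / u = (1 + R) ^ 2 / u * (1 + ‖x‖) ^ 2 := by ring
  have h3 : |log C0| ≤ |log C0| * (1 + ‖x‖) ^ 2 := le_mul_of_one_le_right (abs_nonneg _) hp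
  have h4 : |log c0| ≤ |log c0| * (1 + ‖x‖) ^ 2 := le_mul_of_one_le_right (abs_nonneg _) hp
  have h5 : 0 ≤ (1 + R) ^ 2 / u * (1 + ‖x‖) ^ 2 := by positivity
  rw [abs_le]
  constructor
  · nlinarith [neg_abs_le (log c0), abs_nonneg (log C0)]
  · nlinarith [le_abs_self (log C0), abs_nonneg (log c0)]

lemma dty_bound (H : ∀ᵐ z ∂μ, ‖z‖ ≤ R) {u t : ℝ} (hu : 0 < u) (ht1 : u / 2 ≤ t) (x : Eu d) :
    |dty μ t x| ≤ (2 / u ^ 2 + d / u) * (1 + R) ^ 2 * (1 + ‖x‖) ^ 2 * dens μ t x := by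
  have ht : 0 < t := by linarith
  refine moment_bound (A := 2 / u ^ 2 + d / u) H ht (by positivity) 2
    (fun w => gaussD d t w * (‖w‖ ^ 2 / (2 * t ^ 2) - d / (2 * t))) (fun w => ?_) x
  rw [norm_mul, norm_of_nonneg (gaussD_pos ht w).le, mul_comm]
  have := (gaussD_pos ht w).le
  gcongr
  have hp : 1 ≤ (1 + ‖w‖) ^ 2 := by nlinarith [norm_nonneg w]
  have hp' : ‖w‖ ^ 2 ≤ (1 + ‖w‖) ^ 2 := by nlinarith [norm_nonneg w]
  have h1 : ‖w‖ ^ 2 / (2 * t ^ 2) ≤ (1 + ‖w‖) ^ 2 / (2 * (u / 2) ^ 2) := by gcongr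
  have h2 : d / (2 * t) ≤ d * (1 + ‖w‖) ^ 2 / (2 * (u / 2)) := by
    gcongr; exact le_mul_of_one_le_right (by positivity) hp
  have h3 : (2 / u ^ 2 + d / u) * (1 + ‖w‖) ^ 2 = (1 + ‖w‖) ^ 2 / (2 * (u / 2) ^ 2) +
    d * (1 + ‖w‖) ^ 2 / (2 * (u / 2)) := by field_simp
  rw [h3]
  refine (abs_sub _ _).trans ?_
  rw [abs_of_nonneg (by positivity), abs_of_nonneg (by positivity)]
  exact add_le_add h1 h2

lemma grd_bound (H : ∀ᵐ z ∂μ, ‖z‖ ≤ R) {t : ℝ} (ht : 0 < t) (x : Eu d) :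
    ‖grd μ t x‖ ≤ (1 / t) * (1 + R) ^ 1 * (1 + ‖x‖) ^ 1 * dens μ t x := by
  refine moment_bound H ht (by positivity) 1
    (fun w => (gaussD d t w * (-1 / t)) • w) (fun w => ?_) x
  rw [norm_smul, norm_mul, norm_of_nonneg (gaussD_pos ht w).le, norm_div, norm_neg, norm_one,
    norm_of_nonneg ht.le]
  have := (gaussD_pos ht w).le
  calc gaussD d t w * (1 / t) * ‖w‖ = 1 / t * ‖w‖ * gaussD d t w := by ring
    _ ≤ _ := by gcongr; linarith

lemma lap_bound (H : ∀ᵐ z ∂μ, ‖z‖ ≤ R) {t : ℝ} (ht : 0 < t) (e : Eu d) (he : ‖e‖ = 1) (x : Eu d) :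
    |lap μ t e x| ≤ (1 / t ^ 2 + 1 / t) * (1 + R) ^ 2 * (1 + ‖x‖) ^ 2 * dens μ t x := by
  refine moment_bound H ht (by positivity) 2
    (fun w => gaussD d t w * ((inner ℝ w e) ^ 2 / t ^ 2 - ‖e‖ ^ 2 / t)) (fun w => ?_) x
  rw [norm_mul, norm_of_nonneg (gaussD_pos ht w).le, mul_comm]
  have := (gaussD_pos ht w).le
  gcongr
  have hp : 1 ≤ (1 + ‖w‖) ^ 2 := by nlinarith [norm_nonneg w]
  have hi : (inner ℝ w e) ^ 2 ≤ (1 + ‖w‖) ^ 2 := by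
    have := abs_real_inner_le_norm w e
    rw [he, mul_one] at this
    rw [← sq_abs]
    gcongr
    linarith
  refine (abs_sub _ _).trans ?_
  rw [abs_of_nonneg (by positivity), abs_of_nonneg (by positivity), he, add_mul]
  gcongr
  · rw [one_div_mul_eq_div]; gcongr
  · rw [one_pow]; exact le_mul_of_one_le_right (by positivity) hp

end meas
section meas2
variable {d : ℕ} {μ : Measure (Eu d)} [IsProbabilityMeasure μ] {R : ℝ}

lemma gaussD_jcont (x : Eu d) (u : ℝ) (hu : 0 < u) :
    ContinuousOn (fun p : ℝ × Eu d => gaussD d p.1 (x - p.2)) (Set.Icc (u - u/2) (u + u/2) ×ˢ Set.univ) := by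
  have h0 : ∀ p ∈ Set.Icc (u - u/2) (u + u/2) ×ˢ (Set.univ : Set (Eu d)), 0 < p.1 := by
    rintro p ⟨⟨h, _⟩, _⟩; linarith
  unfold gaussD
  refine ContinuousOn.mul (ContinuousOn.rpow_const (by fun_prop) ?_)
    (ContinuousOn.rexp (ContinuousOn.div (by fun_prop) (by fun_prop) ?_))
  · intro p hp; left; have := h0 p hp; positivity
  · intro p hp; have := h0 p hp; positivity

lemma dens_hasDerivAt (H : ∀ᵐ z ∂μ, ‖z‖ ≤ R) {u : ℝ} (hu : 0 < u) (x : Eu d) :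
    HasDerivAt (fun t => dens μ t x) (dty μ u x) u := by
  have hc : ∀ s, Continuous (fun z => gaussD d s (x - z)) := fun s => by
    have := @gaussD_cont d s; fun_prop
  refine deriv_under H (fun t z => gaussD d t (x - z))
    (fun t z => gaussD d t (x - z) * (‖x - z‖ ^ 2 / (2 * t ^ 2) - d / (2 * t))) u (u/2) (by positivity)
    (hc u) (fun s _ => hc s) ?_ ?_
  · have h0 : ∀ p ∈ Set.Icc (u - u/2) (u + u/2) ×ˢ (Set.univ : Set (Eu d)), 0 < p.1 := by
      rintro p ⟨⟨h, _⟩, _⟩; linarith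
    refine ContinuousOn.mul (gaussD_jcont x u hu) (ContinuousOn.sub
      (ContinuousOn.div (by fun_prop) (by fun_prop) ?_) (ContinuousOn.div (by fun_prop) (by fun_prop) ?_))
    · intro p hp; have := h0 p hp; positivity
    · intro p hp; have := h0 p hp; positivity
  · intro s hs z
    exact gaussD_hasDerivAt (by linarith [hs.1]) _

lemma dens_line (H : ∀ᵐ z ∂μ, ‖z‖ ≤ R) {u : ℝ} (hu : 0 < u) (x e : Eu d) :
    HasLineDerivAt ℝ (dens μ u) (inner ℝ (grd μ u x) e) x e := by
  unfold HasLineDerivAt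
  have hg := @gaussD_cont d u
  have h := deriv_under H (fun s z => gaussD d u (x + s • e - z))
    (fun s z => gaussD d u ((x - z) + s • e) * (-(inner ℝ ((x - z) + s • e) e) / u)) 0 1 one_pos
    (by fun_prop) (fun s _ => by fun_prop) (Continuous.continuousOn (by unfold Function.uncurry; fun_prop)) (fun s _ z => by
      have := gaussD_line hu (x - z) e s
      simpa only [sub_add_eq_add_sub] using this)
  convert! h using 1
  rw [real_inner_comm]
  unfold grd
  rw [← integral_inner (int_cont H _ (by fun_prop))]
  congr 1
  ext z
  rw [inner_smul_right, real_inner_comm]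
  simp
  ring

lemma grd_line (H : ∀ᵐ z ∂μ, ‖z‖ ≤ R) {u : ℝ} (hu : 0 < u) (x e : Eu d) :
    HasLineDerivAt ℝ (fun x => inner ℝ (grd μ u x) e) (lap μ u e x) x e := by
  unfold HasLineDerivAt
  have hg := @gaussD_cont d u
  have h := deriv_under H (fun s z => gaussD d u ((x - z) + s • e) * (-(inner ℝ ((x - z) + s • e) e) / u))
    (fun s z => gaussD d u ((x - z) + s • e) * (-(inner ℝ ((x - z) + s • e) e) / u) *
      (-(inner ℝ ((x - z) + s • e) e) / u) + gaussD d u ((x - z) + s • e) * (-(inner ℝ e e) / u)) 0 1 one_pos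
    (by fun_prop) (fun s _ => by fun_prop) (Continuous.continuousOn (by unfold Function.uncurry; fun_prop)) (fun s _ z => by
      have h1 := gaussD_line hu (x - z) e s
      have h0 : HasDerivAt (fun s : ℝ => (x - z) + s • e) e s := by
        simpa using ((hasDerivAt_id s).smul_const e).const_add (x - z)
      have h2 : HasDerivAt (fun s : ℝ => -(inner ℝ ((x - z) + s • e) e) / u) (-(inner ℝ e e) / u) s := by
        have := ((h0.inner ℝ (hasDerivAt_const s e)).neg.div_const u)
        simpa using this
      exact h1.mul h2)
  convert! h using 1
  · ext s
    show inner ℝ (grd μ u (x + s • e)) e = _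
    rw [real_inner_comm]
    unfold grd
    rw [← integral_inner (int_cont H _ (by fun_prop))]
    congr 1
    ext z
    rw [inner_smul_right, real_inner_comm]
    rw [sub_add_eq_add_sub]
    ring
  · unfold lap
    congr 1
    ext z
    rw [real_inner_self_eq_norm_sq]
    simp
    field_simp
    ring

lemma poly_integrable (H : ∀ᵐ z ∂μ, ‖z‖ ≤ R) {u : ℝ} (hu : 0 < u) {V : Type*} [NormedAddCommGroup V]
    (F : Eu d → V) (hF : AEStronglyMeasurable F) (C : ℝ) (hC : 0 ≤ C) (k : ℕ)
    (h : ∀ x, ‖F x‖ ≤ C * (1 + ‖x‖) ^ k * dens μ u x) : Integrable F := by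
  refine integrable_poly F hF (C * ((π * u) ^ (-(d : ℝ) / 2) * exp (R ^ 2 / u))) (1 / (8 * u))
    (by positivity) k fun x => (h x).trans ?_
  calc _ ≤ C * (1 + ‖x‖) ^ k * (((π * u) ^ (-(d : ℝ) / 2) * exp (R ^ 2 / u)) *
      exp (-(1 / (8 * u)) * ‖x‖ ^ 2)) := by
        gcongr; exact dens_le H hu (by linarith) (by linarith) x
    _ = _ := by ring

lemma entG_hasDerivAt (H : ∀ᵐ z ∂μ, ‖z‖ ≤ R) {u : ℝ} (hu : 0 < u) :
    HasDerivAt (entG d μ) (∫ x, (-log (dens μ u x) - 1) * dty μ u x) u := by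
  obtain ⟨C, hC, hlog⟩ := log_bound H hu
  have hR : 0 ≤ R := by
    obtain ⟨z, hz⟩ := H.exists
    exact (norm_nonneg z).trans hz
  have hnh : Set.Icc (u / 2) (2 * u) ∈ nhds u := Icc_mem_nhds (by linarith) (by linarith)
  set C0 := (π * u) ^ (-(d : ℝ) / 2) * exp (R ^ 2 / u) with hC0
  refine (hasDerivAt_integral_of_dominated_loc_of_deriv_le (s := Set.Icc (u / 2) (2 * u))
    (F := fun t x => negMulLog (dens μ t x))
    (F' := fun t x => (-log (dens μ t x) - 1) * dty μ t x)
    (bound := fun x => ((C + 1) * ((2 / u ^ 2 + d / u) * (1 + R) ^ 2) * C0) *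
      ((1 + ‖x‖) ^ 4 * exp (-(1 / (8 * u)) * ‖x‖ ^ 2))) hnh ?_ ?_ ?_ ?_ ?_ ?_).2
  · exact Filter.Eventually.of_forall fun t =>
      (continuous_negMulLog.comp_stronglyMeasurable (dens_meas t)).aestronglyMeasurable
  · refine poly_integrable H hu _
      (continuous_negMulLog.comp_stronglyMeasurable (dens_meas u)).aestronglyMeasurable C hC 2 fun x => ?_
    have := dens_pos H hu x
    rw [negMulLog, norm_mul, norm_neg, norm_of_nonneg this.le, mul_comm]
    gcongr
    exact hlog u (by linarith) (by linarith) x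
  · exact (((dens_meas u).measurable.log.neg.sub_const 1).mul (dty_meas u).measurable).aestronglyMeasurable
  · refine Filter.Eventually.of_forall fun x t ht => ?_
    have htp : 0 < t := by linarith [ht.1]
    have hf := dens_pos H htp x
    have hp : 1 ≤ (1 + ‖x‖) ^ 2 := by nlinarith [norm_nonneg x]
    have h1 : |-log (dens μ t x) - 1| ≤ (C + 1) * (1 + ‖x‖) ^ 2 := by
      refine (abs_sub _ _).trans ?_
      rw [abs_neg, abs_one]
      linarith [hlog t ht.1 ht.2 x]
    rw [norm_mul]
    calc _ ≤ ((C + 1) * (1 + ‖x‖) ^ 2) * ((2 / u ^ 2 + d / u) * (1 + R) ^ 2 * (1 + ‖x‖) ^ 2 * dens μ t x) := by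
          gcongr
          · exact h1
          · exact dty_bound H hu ht.1 x
      _ ≤ ((C + 1) * (1 + ‖x‖) ^ 2) * ((2 / u ^ 2 + d / u) * (1 + R) ^ 2 * (1 + ‖x‖) ^ 2 *
            (C0 * exp (-(1 / (8 * u)) * ‖x‖ ^ 2))) := by
          gcongr
          exact dens_le H hu ht.1 ht.2 x
      _ = _ := by ring
  · refine integrable_poly _ (Continuous.aestronglyMeasurable (by fun_prop))
      ((C + 1) * ((2 / u ^ 2 + d / u) * (1 + R) ^ 2) * C0) (1 / (8 * u))
      (by positivity) 4 fun x => le_of_eq ?_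
    rw [norm_of_nonneg (by positivity)]
  · refine Filter.Eventually.of_forall fun x t ht => ?_
    have htp : 0 < t := by linarith [ht.1]
    exact (hasDerivAt_negMulLog (dens_pos H htp x).ne').comp t (dens_hasDerivAt H htp x)

lemma grd_integrable (H : ∀ᵐ z ∂μ, ‖z‖ ≤ R) {u : ℝ} (hu : 0 < u) : Integrable (grd μ u) := by
  have hR : 0 ≤ R := by
    obtain ⟨z, hz⟩ := H.exists
    exact (norm_nonneg z).trans hz
  exact poly_integrable H hu _ (grd_meas u).aestronglyMeasurable _ (by positivity) 1
    (grd_bound H hu)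

lemma parts (H : ∀ᵐ z ∂μ, ‖z‖ ≤ R) {u : ℝ} (hu : 0 < u) (e : Eu d) (he : ‖e‖ = 1) :
    Integrable (fun x => (-log (dens μ u x) - 1) * lap μ u e x) ∧
    Integrable (fun x => (inner ℝ (grd μ u x) e) ^ 2 / dens μ u x) ∧
    ∫ x, (-log (dens μ u x) - 1) * lap μ u e x = ∫ x, (inner ℝ (grd μ u x) e) ^ 2 / dens μ u x := by
  obtain ⟨C, hC, hlog⟩ := log_bound H hu
  have hR : 0 ≤ R := by
    obtain ⟨z, hz⟩ := H.exists
    exact (norm_nonneg z).trans hz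
  have hm1 : Measurable (fun x => -log (dens μ u x) - 1) := (dens_meas u).measurable.log.neg.sub_const 1
  have hm2 : Measurable (fun x => inner ℝ (grd μ u x) e) := (grd_meas u).measurable.inner_const
  have hp : ∀ x : Eu d, 1 ≤ (1 + ‖x‖) ^ 2 := fun x => by nlinarith [norm_nonneg x]
  have h1 : ∀ x, |-log (dens μ u x) - 1| ≤ (C + 1) * (1 + ‖x‖) ^ 2 := fun x => by
    refine (abs_sub _ _).trans ?_
    rw [abs_neg, abs_one]
    linarith [hlog u (by linarith) (by linarith) x, hp x]
  have h2 : ∀ x, |inner ℝ (grd μ u x) e| ≤ (1 / u) * (1 + R) ^ 1 * (1 + ‖x‖) ^ 1 * dens μ u x := fun x => by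
    have := abs_real_inner_le_norm (grd μ u x) e
    rw [he, mul_one] at this
    exact this.trans (grd_bound H hu x)
  have i1 : Integrable (fun x => (-log (dens μ u x) - 1) * lap μ u e x) := by
    refine poly_integrable H hu _ (hm1.mul (lap_meas u e).measurable).aestronglyMeasurable
      ((C + 1) * ((1 / u ^ 2 + 1 / u) * (1 + R) ^ 2)) (by positivity) 4 fun x => ?_
    have hf := dens_pos H hu x
    rw [norm_mul]
    calc _ ≤ ((C + 1) * (1 + ‖x‖) ^ 2) * ((1 / u ^ 2 + 1 / u) * (1 + R) ^ 2 * (1 + ‖x‖) ^ 2 * dens μ u x) := by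
          gcongr
          · exact h1 x
          · exact lap_bound H hu e he x
      _ = _ := by ring
  have i2 : Integrable (fun x => (inner ℝ (grd μ u x) e) ^ 2 / dens μ u x) := by
    refine poly_integrable H hu _ ((hm2.pow_const 2).div (dens_meas u).measurable).aestronglyMeasurable
      (((1 / u) * (1 + R) ^ 1) ^ 2) (by positivity) 2 fun x => ?_
    have hf := dens_pos H hu x
    rw [norm_of_nonneg (by positivity), ← sq_abs, div_le_iff₀ hf]
    calc _ ≤ ((1 / u) * (1 + R) ^ 1 * (1 + ‖x‖) ^ 1 * dens μ u x) ^ 2 := by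
          gcongr; exact h2 x
      _ = _ := by ring
  have i3 : Integrable (fun x => (-log (dens μ u x) - 1) * inner ℝ (grd μ u x) e) := by
    refine poly_integrable H hu _ (hm1.mul hm2).aestronglyMeasurable
      ((C + 1) * ((1 / u) * (1 + R) ^ 1)) (by positivity) 3 fun x => ?_
    have hf := dens_pos H hu x
    rw [norm_mul]
    calc _ ≤ ((C + 1) * (1 + ‖x‖) ^ 2) * ((1 / u) * (1 + R) ^ 1 * (1 + ‖x‖) ^ 1 * dens μ u x) := by
          gcongr
          · exact h1 x
          · exact h2 x
      _ = _ := by ring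
  have e2 : ∀ x, -(inner ℝ (grd μ u x) e / dens μ u x) * inner ℝ (grd μ u x) e =
     - ((inner ℝ (grd μ u x) e) ^ 2 / dens μ u x) := fun x => by ring
  refine ⟨i1, i2, ?_⟩
  have := integral_bilinear_hasLineDerivAt_right_eq_neg_left_of_integrable (μ := volume)
    (f := fun x => -log (dens μ u x) - 1) (f' := fun x => -(inner ℝ (grd μ u x) e / dens μ u x))
    (g := fun x => inner ℝ (grd μ u x) e) (g' := lap μ u e) (v := e)
    (B := ContinuousLinearMap.mul ℝ ℝ) (by
      simp only [ContinuousLinearMap.mul_apply', e2]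
      exact i2.neg) i1 i3 (fun x _ => by
        have h := dens_line H hu x e
        unfold HasLineDerivAt at h ⊢
        have h' := h.log (by simpa using (dens_pos H hu x).ne')
        simpa using (h'.neg.sub_const 1)) (fun x _ => grd_line H hu x e)
  simp only [ContinuousLinearMap.mul_apply', e2] at this
  rw [this, integral_neg, neg_neg]

end meas2
section meas3
variable {d : ℕ} {μ : Measure (Eu d)} [IsProbabilityMeasure μ] {R : ℝ}

lemma gaussD_eq {d : ℕ} {t : ℝ} (_ : 0 < t) (w : Eu d) :
    gaussD d t w = (2 * π * t) ^ (-(d : ℝ) / 2) * exp (-(1 / (2 * t)) * ‖w‖ ^ 2) := by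
  unfold gaussD
  congr 2
  ring

lemma dens_integrable (H : ∀ᵐ z ∂μ, ‖z‖ ≤ R) {u : ℝ} (hu : 0 < u) : Integrable (dens μ u) := by
  refine poly_integrable H hu _ (dens_meas u).aestronglyMeasurable 1 zero_le_one 0 fun x => ?_
  rw [norm_of_nonneg (dens_pos H hu x).le]
  simp

lemma dens_integral (H : ∀ᵐ z ∂μ, ‖z‖ ≤ R) {u : ℝ} (hu : 0 < u) : ∫ x, dens μ u x = 1 := by
  unfold dens
  rw [integral_integral_swap]
  · have : ∀ z : Eu d, ∫ x, gaussD d u (x - z) = 1 := fun z => by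
      rw [integral_sub_right_eq_self (gaussD d u) z, gaussD_integral hu]
    simp [this]
  · have hg := @gaussD_cont d u
    refine Integrable.mono' (((integrable_gauss (d := d) (1 / (8 * u)) (by positivity)).const_mul
      ((π * u) ^ (-(d : ℝ) / 2) * exp (R ^ 2 / u))).comp_fst μ)
      (Continuous.aestronglyMeasurable (by unfold Function.uncurry; fun_prop)) ?_
    filter_upwards [(Measure.quasiMeasurePreserving_snd (μ := volume) (ν := μ)).ae H] with p hp
    rw [Function.uncurry, norm_of_nonneg (gaussD_pos hu _).le]
    exact gaussD_shift_le hu (by linarith) (by linarith) _ _ hp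

lemma fisher (H : ∀ᵐ z ∂μ, ‖z‖ ≤ R) {u : ℝ} (hu : 0 < u) :
    (∫ x, ‖grd μ u x‖) ^ 2 / 2 ≤ ∫ x, (-log (dens μ u x) - 1) * dty μ u x := by
  let b := EuclideanSpace.basisFun (Fin d) ℝ
  have hb : ∀ i, ‖b i‖ = 1 := fun i => b.orthonormal.1 i
  have hp := fun i => parts H hu (b i) (hb i)
  have hg := @gaussD_cont d u
  have h1 : ∀ x, dty μ u x = (1 / 2) * ∑ i, lap μ u (b i) x := fun x => by
    unfold dty lap
    rw [← integral_finsetSum _ (fun i _ => int_cont H _ (by fun_prop)), ← integral_const_mul]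
    congr 1
    ext z
    rw [← Finset.mul_sum, Finset.sum_sub_distrib, ← Finset.sum_div, b.sum_sq_inner_left]
    simp [hb]
    field_simp
  have h2 : ∀ x, ‖grd μ u x‖ ^ 2 / dens μ u x = ∑ i, (inner ℝ (grd μ u x) (b i)) ^ 2 / dens μ u x := fun x => by
    rw [← Finset.sum_div, b.sum_sq_inner_left]
  have hI : Integrable (fun x => ‖grd μ u x‖ ^ 2 / dens μ u x) := by
    simp only [h2]
    exact integrable_finsetSum _ fun i _ => (hp i).2.1
  have h3 : ∫ x, (-log (dens μ u x) - 1) * dty μ u x = (1 / 2) * ∫ x, ‖grd μ u x‖ ^ 2 / dens μ u x := by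
    simp only [h2]
    rw [integral_finsetSum _ fun i _ => (hp i).2.1, ← Finset.sum_congr rfl (fun i _ => (hp i).2.2),
      ← integral_finsetSum _ fun i _ => (hp i).1, ← integral_const_mul]
    congr 1
    ext x
    rw [h1, Finset.mul_sum, Finset.mul_sum, Finset.mul_sum]
    exact Finset.sum_congr rfl fun i _ => by ring
  rw [h3]
  set A := ∫ x, ‖grd μ u x‖ with hA
  have h4 : ∫ x, 2 * A * ‖grd μ u x‖ ≤ ∫ x, (A ^ 2 * dens μ u x + ‖grd μ u x‖ ^ 2 / dens μ u x) := by
    refine integral_mono ((grd_integrable H hu).norm.const_mul _)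
      (((dens_integrable H hu).const_mul _).add hI) fun x => ?_
    have hf := dens_pos H hu x
    have : A ^ 2 * dens μ u x + ‖grd μ u x‖ ^ 2 / dens μ u x - 2 * A * ‖grd μ u x‖ =
      (A * dens μ u x - ‖grd μ u x‖) ^ 2 / dens μ u x := by field_simp; ring
    have h' : 0 ≤ (A * dens μ u x - ‖grd μ u x‖) ^ 2 / dens μ u x := by positivity
    simp only
    linarith
  rw [integral_const_mul, integral_add ((dens_integrable H hu).const_mul _) hI, integral_const_mul,
    dens_integral H hu, ← hA] at h4
  nlinarith

end meas3

noncomputable def gg (d : ℕ) (t : ℝ) (w : Eu d) : Eu d := (gaussD d t w * (-1 / t)) • w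

lemma gg_cont {d : ℕ} {t : ℝ} : Continuous (gg d t) := by
  have := @gaussD_cont d t
  unfold gg; fun_prop

lemma gg_norm {d : ℕ} {t : ℝ} (ht : 0 < t) (w : Eu d) : ‖gg d t w‖ = 1 / t * ‖w‖ * gaussD d t w := by
  unfold gg
  rw [norm_smul, norm_mul, norm_of_nonneg (gaussD_pos ht w).le, norm_div, norm_neg, norm_one,
    norm_of_nonneg ht.le]
  ring

lemma gg_bdd {d : ℕ} {t : ℝ} (ht : 0 < t) : ∃ M, 0 ≤ M ∧ ∀ w, ‖gg d t w‖ ≤ M := by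
  refine ⟨1 / t * ((2 * π * t) ^ (-(d : ℝ) / 2) * exp ((1 : ℕ) ^ 2 / (2 * (1 / (2 * t))))),
    by positivity, fun w => ?_⟩
  rw [gg_norm ht, gaussD_eq ht]
  have h := pow_exp_bound (1 / (2 * t)) (by positivity) 1 ‖w‖ (norm_nonneg _)
  have h2 : exp (-(1 / (2 * t) / 2) * ‖w‖ ^ 2) ≤ 1 := by
    apply exp_le_one_iff.2
    rw [neg_mul, neg_nonpos]; positivity
  calc _ ≤ 1 / t * ((2 * π * t) ^ (-(d : ℝ) / 2) * ((1 + ‖w‖) ^ 1 * exp (-(1 / (2 * t)) * ‖w‖ ^ 2))) := by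
        rw [pow_one, mul_assoc]
        gcongr 1 / t * ?_
        rw [mul_left_comm]
        gcongr
        linarith
    _ ≤ 1 / t * ((2 * π * t) ^ (-(d : ℝ) / 2) * (exp ((1 : ℕ) ^ 2 / (2 * (1 / (2 * t)))) * 1)) := by
        gcongr 1 / t * (_ * ?_)
        refine h.trans ?_
        gcongr
    _ = _ := by rw [mul_one]

section moments
variable {d : ℕ} {s : ℝ}

lemma gauss_poly_integrable (hs : 0 < s) (p : Eu d → ℝ) (hp : Continuous p) (C : ℝ) (k : ℕ)
    (hb : ∀ x, |p x| ≤ C * (1 + ‖x‖) ^ k) : Integrable (fun x => gaussD d s x * p x) := by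
  have hg := @gaussD_cont d s
  refine integrable_poly _ (Continuous.aestronglyMeasurable (by fun_prop))
    ((2 * π * s) ^ (-(d : ℝ) / 2) * C) (1 / (2 * s)) (by positivity) k fun x => ?_
  rw [norm_mul, norm_of_nonneg (gaussD_pos hs x).le, gaussD_eq hs, Real.norm_eq_abs]
  calc _ ≤ (2 * π * s) ^ (-(d : ℝ) / 2) * exp (-(1 / (2 * s)) * ‖x‖ ^ 2) * (C * (1 + ‖x‖) ^ k) := by
        gcongr; exact hb x
    _ = _ := by ring

lemma int0 (hs : 0 < s) : Integrable (fun x : Eu d => gaussD d s x) := by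
  simpa using gauss_poly_integrable (d := d) hs (fun _ => 1) (by fun_prop) 1 0 (by simp)

lemma int1 (hs : 0 < s) (e : Eu d) : Integrable (fun x : Eu d => gaussD d s x * inner ℝ x e) := by
  refine gauss_poly_integrable hs _ (by fun_prop) ‖e‖ 1 fun x => ?_
  refine (abs_real_inner_le_norm x e).trans ?_
  nlinarith [norm_nonneg x, norm_nonneg e]

lemma int2 (hs : 0 < s) (e : Eu d) : Integrable (fun x : Eu d => gaussD d s x * (inner ℝ x e) ^ 2) := by
  refine gauss_poly_integrable hs _ (by fun_prop) (‖e‖ ^ 2) 2 fun x => ?_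
  rw [abs_pow, ← mul_pow]
  gcongr
  refine (abs_real_inner_le_norm x e).trans ?_
  nlinarith [norm_nonneg x, norm_nonneg e]

lemma mom1 (e : Eu d) : ∫ x : Eu d, gaussD d s x * inner ℝ x e = 0 := by
  have h := integral_neg_eq_self (fun x : Eu d => gaussD d s x * inner ℝ x e) volume
  have h2 : ∀ x : Eu d, gaussD d s (-x) = gaussD d s x := fun x => by simp [gaussD]
  simp only [h2, inner_neg_left, mul_neg, integral_neg] at h
  linarith

lemma mom2 (hs : 0 < s) (e : Eu d) (he : ‖e‖ = 1) :
    ∫ x : Eu d, gaussD d s x * (inner ℝ x e) ^ 2 = s := by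
  have e2 : ∀ x : Eu d, inner ℝ x e * (gaussD d s x * (-(inner ℝ x e) / s)) =
    (-1 / s) * (gaussD d s x * (inner ℝ x e) ^ 2) := fun x => by ring
  have := integral_bilinear_hasLineDerivAt_right_eq_neg_left_of_integrable (μ := (volume : Measure (Eu d)))
    (f := fun x => inner ℝ x e) (f' := fun x => 1)
    (g := gaussD d s) (g' := fun x => gaussD d s x * (-(inner ℝ x e) / s)) (v := e)
    (B := ContinuousLinearMap.mul ℝ ℝ) (by simpa using int0 hs) (by
      simp only [ContinuousLinearMap.mul_apply', e2]
      exact (int2 hs e).const_mul _) (by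
      simp only [ContinuousLinearMap.mul_apply']
      simpa only [mul_comm] using int1 hs e) (fun x _ => by
        unfold HasLineDerivAt
        have h0 : HasDerivAt (fun s : ℝ => x + s • e) e 0 := by
          simpa using ((hasDerivAt_id (0 : ℝ)).smul_const e).const_add x
        simpa [he] using h0.inner ℝ (hasDerivAt_const (0 : ℝ) e)) (fun x _ => by
        unfold HasLineDerivAt
        simpa using gaussD_line hs x e 0)
  simp only [ContinuousLinearMap.mul_apply', e2, one_mul, integral_const_mul, gaussD_integral hs] at this
  field_simp at this
  linarith

lemma mom2' (hs : 0 < s) : Integrable (fun x : Eu d => gaussD d s x * ‖x‖ ^ 2) ∧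
    ∫ x : Eu d, gaussD d s x * ‖x‖ ^ 2 = d * s := by
  let b := EuclideanSpace.basisFun (Fin d) ℝ
  have hb : ∀ i, ‖b i‖ = 1 := fun i => b.orthonormal.1 i
  have h : ∀ x : Eu d, gaussD d s x * ‖x‖ ^ 2 = ∑ i, gaussD d s x * (inner ℝ x (b i)) ^ 2 := fun x => by
    rw [← Finset.mul_sum, b.sum_sq_inner_left]
  simp only [h]
  refine ⟨integrable_finsetSum _ fun i _ => int2 hs _, ?_⟩
  rw [integral_finsetSum _ fun i _ => int2 hs _]
  simp [mom2 hs _ (hb _)]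

end moments

lemma gauss_prod {d : ℕ} {u v : ℝ} (hu : 0 < u) (hv : 0 < v) (w h : Eu d) :
    gaussD d u ((u / (u + v)) • w - h) * gaussD d v ((v / (u + v)) • w + h) =
    gaussD d (u + v) w * gaussD d (u * v / (u + v)) h := by
  unfold gaussD
  have h1 : (2 * π * u) ^ (-(d : ℝ) / 2) * (2 * π * v) ^ (-(d : ℝ) / 2) =
    (2 * π * (u + v)) ^ (-(d : ℝ) / 2) * (2 * π * (u * v / (u + v))) ^ (-(d : ℝ) / 2) := by
    rw [← mul_rpow (by positivity) (by positivity), ← mul_rpow (by positivity) (by positivity)]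
    congr 1
    field_simp
  rw [mul_mul_mul_comm, h1, mul_mul_mul_comm _ (exp _) _ (exp (-‖h‖ ^ 2 / _)), ← exp_add, ← exp_add]
  congr 2
  rw [norm_sub_sq_real, norm_add_sq_real, norm_smul, norm_smul, inner_smul_left, inner_smul_left,
    mul_pow, mul_pow]
  simp only [Real.norm_eq_abs, sq_abs, conj_trivial]
  field_simp
  ring

lemma kernel_id {d : ℕ} {u v : ℝ} (hu : 0 < u) (hv : 0 < v) (w : Eu d) :
    ∫ y, inner ℝ (gg d u (w - y)) (gg d v y) = 2 * gaussDy d (u + v) w := by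
  have hs : 0 < u * v / (u + v) := by positivity
  set s := u * v / (u + v) with hsd
  rw [← integral_add_left_eq_self _ ((v / (u + v)) • w)]
  have h1 : ∀ h : Eu d, inner ℝ (gg d u (w - ((v / (u + v)) • w + h))) (gg d v ((v / (u + v)) • w + h)) =
     (gaussD d (u + v) w * (1 / (u * v))) * (gaussD d s h * (u * v / (u + v) ^ 2 * ‖w‖ ^ 2)
      + (gaussD d s h * inner ℝ h w) * ((u - v) / (u + v)) - gaussD d s h * ‖h‖ ^ 2) := fun h => by
    have e1 : w - ((v / (u + v)) • w + h) = (u / (u + v)) • w - h := by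
      have : w = (u / (u + v)) • w + (v / (u + v)) • w := by
        rw [← add_smul, ← add_div, div_self (by positivity), one_smul]
      nth_rewrite 1 [this]
      abel
    rw [e1]
    unfold gg
    rw [inner_smul_left, inner_smul_right, ← mul_assoc]
    have e2 : inner ℝ ((u / (u + v)) • w - h) ((v / (u + v)) • w + h) =
      u * v / (u + v) ^ 2 * ‖w‖ ^ 2 + inner ℝ h w * ((u - v) / (u + v)) - ‖h‖ ^ 2 := by
      rw [inner_sub_left, inner_add_right, inner_add_right, inner_smul_left, inner_smul_left,
        inner_smul_right, inner_smul_right, real_inner_self_eq_norm_sq, real_inner_self_eq_norm_sq,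
        real_inner_comm h w]
      simp only [conj_trivial]
      field_simp
      ring
    rw [e2]
    have e3 := gauss_prod hu hv w h
    rw [← hsd] at e3
    simp only [conj_trivial]
    calc _ = (gaussD d u ((u / (u + v)) • w - h) * gaussD d v ((v / (u + v)) • w + h)) * (1 / (u * v)) *
        (u * v / (u + v) ^ 2 * ‖w‖ ^ 2 + inner ℝ h w * ((u - v) / (u + v)) - ‖h‖ ^ 2) := by
          field_simp
      _ = _ := by rw [e3]; ring
  simp only [h1]
  have hi : Integrable (fun h : Eu d => gaussD d s h * (u * v / (u + v) ^ 2 * ‖w‖ ^ 2)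
      + (gaussD d s h * inner ℝ h w) * ((u - v) / (u + v))) :=
    ((int0 hs).mul_const _).add ((int1 hs w).mul_const _)
  rw [integral_const_mul, integral_sub hi (mom2' hs).1,
    integral_add ((int0 hs).mul_const _) ((int1 hs w).mul_const _), integral_mul_const, integral_mul_const,
    gaussD_integral hs, mom1, (mom2' hs).2, gaussDy_eq (by positivity), hsd]
  field_simp
  ring

lemma conv_formula {d : ℕ} {μ ν : Measure (Eu d)} [IsProbabilityMeasure μ] [IsProbabilityMeasure ν]
    {R S : ℝ} (H : ∀ᵐ z ∂μ, ‖z‖ ≤ R) (H' : ∀ᵐ z ∂ν, ‖z‖ ≤ S) {u v : ℝ} (hu : 0 < u) (hv : 0 < v)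
    (x : Eu d) :
    ∫ z, gaussDy d (u + v) (x - z) ∂(μ ∗ ν) =
      (1 / 2) * ∫ y, inner ℝ (grd μ u (x - y)) (grd ν v y) := by
  have hcu := @gg_cont d u
  have hcv := @gg_cont d v
  have hS : 0 ≤ S := by
    obtain ⟨z, hz⟩ := H'.exists
    exact (norm_nonneg z).trans hz
  have hy : Continuous (gaussDy d (u + v)) := by
    have : gaussDy d (u + v) = fun w => gaussD d (u + v) w *
        (‖w‖ ^ 2 / (2 * (u + v) ^ 2) - d / (2 * (u + v))) := by
      ext w; exact gaussDy_eq (by positivity) w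
    rw [this]
    have := @gaussD_cont d (u + v)
    fun_prop
  have h1 : ∀ p : Eu d × Eu d, gaussDy d (u + v) (x - (p.1 + p.2)) =
      (1 / 2) * ∫ y, inner ℝ (gg d u (x - y - p.1)) (gg d v (y - p.2)) := fun p => by
    have h := kernel_id hu hv (x - (p.1 + p.2))
    rw [← integral_sub_right_eq_self _ p.2] at h
    have e : ∀ y, x - (p.1 + p.2) - (y - p.2) = x - y - p.1 := fun y => by abel
    simp only [e] at h
    rw [h]; ring
  rw [Measure.conv, integral_map (by fun_prop) (Continuous.aestronglyMeasurable (by fun_prop))]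
  simp only [h1]
  rw [integral_const_mul]
  congr 1
  obtain ⟨M, hM0, hM⟩ := @gg_bdd d u hu
  rw [integral_integral_swap]
  · congr 1
    ext y
    have hiu : Integrable (fun a => gg d u (x - y - a)) μ := int_cont H _ (by fun_prop)
    have hiv : Integrable (fun a => gg d v (y - a)) ν := int_cont H' _ (by fun_prop)
    have hi : Integrable (fun p : Eu d × Eu d => inner ℝ (gg d u (x - y - p.1)) (gg d v (y - p.2))) (μ.prod ν) := by
      refine Integrable.mono' ((hiv.norm.const_mul M).comp_snd μ)
        (Continuous.aestronglyMeasurable (by fun_prop)) (Filter.Eventually.of_forall fun p => ?_)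
      refine (norm_inner_le_norm _ _).trans ?_
      exact mul_le_mul_of_nonneg_right (hM _) (norm_nonneg _)
    rw [integral_prod _ hi]
    simp only
    have e1 : ∀ a, ∫ b, inner ℝ (gg d u (x - y - a)) (gg d v (y - b)) ∂ν =
        inner ℝ (gg d u (x - y - a)) (grd ν v y) := fun a => integral_inner hiv _
    simp only [e1]
    have e2 := integral_inner (𝕜 := ℝ) hiu (grd ν v y)
    calc _ = ∫ a, inner ℝ (grd ν v y) (gg d u (x - y - a)) ∂μ := by
          congr 1; ext a; exact real_inner_comm _ _
      _ = inner ℝ (grd ν v y) (grd μ u (x - y)) := e2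
      _ = _ := real_inner_comm _ _
  · set C0 := (π * v) ^ (-(d : ℝ) / 2) * exp (S ^ 2 / v) with hC0
    have hB : Integrable (fun y : Eu d => (M * (1 / v * (1 + S) * C0)) *
        ((1 + ‖y‖) ^ 1 * exp (-(1 / (8 * v)) * ‖y‖ ^ 2))) := by
      refine integrable_poly _ (Continuous.aestronglyMeasurable (by fun_prop))
        (M * (1 / v * (1 + S) * C0)) (1 / (8 * v)) (by positivity) 1 fun x => le_of_eq ?_
      rw [norm_of_nonneg (by positivity)]
    refine Integrable.mono' (hB.comp_snd (μ.prod ν))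
      (Continuous.aestronglyMeasurable (by unfold Function.uncurry; fun_prop)) ?_
    have H2 : ∀ᵐ p ∂(μ.prod ν), ‖p.2‖ ≤ S := Measure.quasiMeasurePreserving_snd.ae H'
    have H3 : ∀ᵐ q ∂((μ.prod ν).prod (volume : Measure (Eu d))), ‖q.1.2‖ ≤ S :=
      Measure.quasiMeasurePreserving_fst.ae H2
    filter_upwards [H3] with q hq
    obtain ⟨⟨a, b⟩, y⟩ := q
    simp only [Function.uncurry] at hq ⊢
    refine (norm_inner_le_norm _ _).trans ?_
    rw [mul_assoc M]
    refine mul_le_mul (hM _) ?_ (norm_nonneg _) hM0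
    rw [gg_norm hv]
    have h2 := gaussD_shift_le hv (by linarith) (by linarith : v ≤ 2 * v) y b hq
    have hp := (gaussD_pos hv (y - b)).le
    have h3 : ‖y - b‖ ≤ (1 + S) * (1 + ‖y‖) := by
      have := norm_sub_le y b
      nlinarith [norm_nonneg y, mul_nonneg hS (norm_nonneg y)]
    calc _ ≤ 1 / v * ((1 + S) * (1 + ‖y‖)) * (C0 * exp (-(1 / (8 * v)) * ‖y‖ ^ 2)) := by gcongr
      _ = _ := by ring

lemma detail_bound {d : ℕ} {μ ν : Measure (Eu d)} [IsProbabilityMeasure μ] [IsProbabilityMeasure ν]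
    {R S : ℝ} (H : ∀ᵐ z ∂μ, ‖z‖ ≤ R) (H' : ∀ᵐ z ∂ν, ‖z‖ ≤ S) {u v : ℝ} (hu : 0 < u) (hv : 0 < v) :
    ∫ x, |∫ z, gaussDy d (u + v) (x - z) ∂(μ ∗ ν)| ≤
      (1 / 2) * ((∫ x, ‖grd μ u x‖) * ∫ x, ‖grd ν v x‖) := by
  have i1 := (grd_integrable H hu).norm
  have i2 := (grd_integrable H' hv).norm
  have hc := i2.integrable_convolution (ContinuousLinearMap.mul ℝ ℝ) i1
  have he := i2.ae_convolution_exists (ContinuousLinearMap.mul ℝ ℝ) i1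
  have hI := integral_convolution (μ := volume) (ν := volume) (ContinuousLinearMap.mul ℝ ℝ) i2 i1
  rw [ContinuousLinearMap.mul_apply', mul_comm] at hI
  rw [← hI, ← integral_const_mul]
  refine integral_mono_of_nonneg (Filter.Eventually.of_forall fun x => abs_nonneg _)
    (hc.const_mul _) ?_
  filter_upwards [he] with x hx
  rw [conv_formula H H' hu hv, abs_mul, abs_of_pos (by norm_num : (0 : ℝ) < 1 / 2)]
  gcongr
  rw [convolution_def]
  refine norm_integral_le_of_norm_le (f := fun y => inner ℝ (grd μ u (x - y)) (grd ν v y)) hx (Filter.Eventually.of_forall fun y => ?_)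
  rw [ContinuousLinearMap.mul_apply', mul_comm]
  exact norm_inner_le_norm _ _

lemma ae_bdd {d : ℕ} {μ : Measure (Eu d)} {K : Set (Eu d)} (hK : IsCompact K) (hμ : μ Kᶜ = 0) :
    ∃ R, ∀ᵐ z ∂μ, ‖z‖ ≤ R := by
  obtain ⟨R, hR⟩ := hK.isBounded.exists_norm_le
  refine ⟨R, ?_⟩
  have : ∀ᵐ z ∂μ, z ∈ K := mem_ae_iff.2 hμ
  filter_upwards [this] with z hz using hR z hz

theorem statement9 {d : ℕ} (μ ν : Measure (EuclideanSpace ℝ (Fin d)))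
    [IsProbabilityMeasure μ] [IsProbabilityMeasure ν]
    (Kμ Kν : Set (EuclideanSpace ℝ (Fin d))) (hKμ : IsCompact Kμ) (hμK : μ Kμᶜ = 0)
    (hKν : IsCompact Kν) (hνK : ν Kνᶜ = 0)
    (r u v : ℝ) (hr : 0 < r) (hu : 0 < u) (hv : 0 < v) (huv : r ^ 2 = u + v) :
    ∃ Du Dv : ℝ, HasDerivWithinAt (entG d μ) Du (Set.Ioi u) u ∧
      HasDerivWithinAt (entG d ν) Dv (Set.Ioi v) v ∧
      detail d (μ ∗ ν) r ≤
        r ^ 2 / 2 * Real.Gamma ((d : ℝ) / 2) * ((d : ℝ) / (2 * Real.exp 1)) ^ (-(d : ℝ) / 2) *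
          Real.sqrt (Du * Dv) := by
  obtain ⟨R, H⟩ := ae_bdd hKμ hμK
  obtain ⟨S, H'⟩ := ae_bdd hKν hνK
  refine ⟨_, _, (entG_hasDerivAt H hu).hasDerivWithinAt, (entG_hasDerivAt H' hv).hasDerivWithinAt, ?_⟩
  have f1 := fisher H hu
  have f2 := fisher H' hv
  have hb := detail_bound H H' hu hv
  set A := ∫ x, ‖grd μ u x‖
  set B := ∫ x, ‖grd ν v x‖
  have hA : 0 ≤ A := integral_nonneg fun _ => norm_nonneg _
  have hB : 0 ≤ B := integral_nonneg fun _ => norm_nonneg _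
  unfold detail
  rw [huv]
  have hG : 0 ≤ Real.Gamma ((d : ℝ) / 2) := Real.Gamma_nonneg_of_nonneg (by positivity)
  have hK : 0 ≤ (u + v) / 2 * Real.Gamma ((d : ℝ) / 2) *
    ((d : ℝ) / (2 * Real.exp 1)) ^ (-(d : ℝ) / 2) := by positivity
  rw [show (u + v) * (Real.Gamma ((d : ℝ) / 2) / 2) = (u + v) / 2 * Real.Gamma ((d : ℝ) / 2) by ring]
  refine mul_le_mul_of_nonneg_left (hb.trans ?_) hK
  apply Real.le_sqrt_of_sq_le
  calc (1 / 2 * (A * B)) ^ 2 = (A ^ 2 / 2) * (B ^ 2 / 2) := by ring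
    _ ≤ _ := mul_le_mul f1 f2 (by positivity) ((by positivity : (0 : ℝ) ≤ A ^ 2 / 2).trans f1)
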